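/- For every integer d ≥ 1 there is a function f : ℕ → ℕ with f(p)/p → 0 as p → ∞ such that: every finite set of n points in ℝ^d and every positive integer p admit a partition of the point set into at most p subsets, each of size at most ⌈2n/p⌉, such that every hyperplane in ℝ^d cuts at most f(p) of the subsets. -/

import Mathlib

noncomputable section

/-- The hyperplane given as the zero set of the nonconstant affine functional `f`
cuts a point set `S` if both open halfspaces bounded by it contain a point of `S`. -/
def Cuts {d : ℕ} (f : (Fin d → ℝ) →ᵃ[ℝ] ℝ) (S : Finset (Fin d → ℝ)) : Prop :=
  (∃ x ∈ S, 0 < f x) ∧ (∃ x ∈ S, f x < 0)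

open Module

section Cells

variable {W : Type} [AddCommGroup W] [Module ℝ W]

/-- Every functional in `D` has the same weak sign at `w`. -/
def SignedOn (D : Set (Dual ℝ W)) (w : W) : Prop :=
  (∀ φ ∈ D, 0 ≤ φ w) ∨ (∀ φ ∈ D, φ w ≤ 0)

/-- The dual space is covered by at most `K` cells, on each of which a proportion of at least
`1 / N` of the vectors `g i`, `i ∈ I`, has constant weak sign. -/
def HasCells (K N : ℕ) {ι : Type} (I : Finset ι) (g : ι → W) : Prop :=
  ∃ C : Finset (Set (Dual ℝ W)), C.card ≤ K ∧ (∀ φ, ∃ D ∈ C, φ ∈ D) ∧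
    ∀ D ∈ C, ∃ J ⊆ I, I.card ≤ N * J.card ∧ ∀ i ∈ J, SignedOn D (g i)

theorem SignedOn.mono {D D' : Set (Dual ℝ W)} {w : W} (h : SignedOn D w) (hD : D' ⊆ D) :
    SignedOn D' w :=
  h.imp (fun h φ hφ => h φ (hD hφ)) (fun h φ hφ => h φ (hD hφ))

theorem SignedOn.of_smul {D : Set (Dual ℝ W)} {w : W} {c : ℝ} (hc : c ≠ 0)
    (h : SignedOn D (c • w)) : SignedOn D w := by
  rcases lt_or_gt_of_ne hc with hc | hc
  · rcases h with h | h
    · right; intro φ hφ; have := h φ hφ; simp only [map_smul, smul_eq_mul] at this; nlinarith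
    · left; intro φ hφ; have := h φ hφ; simp only [map_smul, smul_eq_mul] at this; nlinarith
  · rcases h with h | h
    · left; intro φ hφ; have := h φ hφ; simp only [map_smul, smul_eq_mul] at this; nlinarith
    · right; intro φ hφ; have := h φ hφ; simp only [map_smul, smul_eq_mul] at this; nlinarith

/-- If `β ≤ 0 ≤ β'`, the signs of `w' - w` and of `β' • w - β • w'` determine the sign of `w`
or that of `w'`. -/
theorem SignedOn.of_sub_of_combination {D : Set (Dual ℝ W)} {w w' : W} {β β' : ℝ}
    (hβ : β ≤ 0) (hβ' : 0 ≤ β') (hne : β ≠ β')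
    (hu : SignedOn D (w' - w)) (hv : SignedOn D (β' • w - β • w')) :
    SignedOn D w ∨ SignedOn D w' := by
  have hpos : 0 < β' - β := sub_pos.2 (lt_of_le_of_ne (hβ.trans hβ') hne)
  simp only [SignedOn, map_sub, map_smul, smul_eq_mul] at hu hv ⊢
  rcases hu with hu | hu <;> rcases hv with hv | hv
  · right; left; intro φ hφ
    have h1 := hu φ hφ; have h2 := hv φ hφ
    by_contra! h
    nlinarith [mul_nonneg hβ' h1, mul_pos hpos (neg_pos.2 h)]
  · left; right; intro φ hφ
    have h1 := hu φ hφ; have h2 := hv φ hφ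
    by_contra! h
    nlinarith [mul_nonneg (neg_nonneg.2 hβ) h1, mul_pos hpos h]
  · left; left; intro φ hφ
    have h1 := hu φ hφ; have h2 := hv φ hφ
    by_contra! h
    nlinarith [mul_nonneg (neg_nonneg.2 hβ) (neg_nonneg.2 h1), mul_pos hpos (neg_pos.2 h)]
  · right; right; intro φ hφ
    have h1 := hu φ hφ; have h2 := hv φ hφ
    by_contra! h
    nlinarith [mul_nonneg hβ' (neg_nonneg.2 h1), mul_pos hpos h]

variable {ι : Type}

theorem HasCells.mono {K K' N N' c : ℕ} {I I' : Finset ι} {g g' : ι → W}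
    (h : HasCells K' N' I' g') (hI : I' ⊆ I) (hcard : I.card ≤ c * I'.card)
    (hg : ∀ D, ∀ i ∈ I', SignedOn D (g' i) → SignedOn D (g i)) (hK : K' ≤ K) (hN : c * N' ≤ N) :
    HasCells K N I g := by
  obtain ⟨C, hC, hcov, hJ⟩ := h
  refine ⟨C, hC.trans hK, hcov, fun D hD => ?_⟩
  obtain ⟨J, hJI, hJc, hJs⟩ := hJ D hD
  refine ⟨J, hJI.trans hI, ?_, fun i hi => hg D i (hJI hi) (hJs i hi)⟩
  calc I.card ≤ c * I'.card := hcard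
    _ ≤ c * (N' * J.card) := Nat.mul_le_mul_left _ hJc
    _ = c * N' * J.card := by ring
    _ ≤ N * J.card := Nat.mul_le_mul_right _ hN

theorem HasCells.of_submodule {K N : ℕ} (U : Submodule ℝ W) {I : Finset ι} {g : ι → W}
    (hg : ∀ i, g i ∈ U) (h : HasCells K N I (fun i => (⟨g i, hg i⟩ : U))) :
    HasCells K N I g := by
  classical
  obtain ⟨C, hC, hcov, hJ⟩ := h
  refine ⟨C.image (fun D => {φ | φ.comp U.subtype ∈ D}), Finset.card_image_le.trans hC,
    fun φ => ?_, fun D hD => ?_⟩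
  · obtain ⟨D, hD, hφ⟩ := hcov (φ.comp U.subtype)
    exact ⟨_, Finset.mem_image_of_mem _ hD, hφ⟩
  · obtain ⟨D, hDC, rfl⟩ := Finset.mem_image.1 hD
    obtain ⟨J, hJI, hJc, hJs⟩ := hJ D hDC
    exact ⟨J, hJI, hJc, fun i hi => (hJs i hi).imp (fun h φ hφ => h _ hφ) (fun h φ hφ => h _ hφ)⟩

theorem exists_median (I : Finset ι) (b : ι → ℝ) :
    ∃ t, I.card ≤ 2 * (I.filter (fun i => b i ≤ t)).card ∧
      I.card ≤ 2 * (I.filter (fun i => t ≤ b i)).card := by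
  classical
  rcases I.eq_empty_or_nonempty with rfl | hI
  · exact ⟨0, by simp⟩
  let V := (I.image b).filter (fun t => I.card ≤ 2 * (I.filter (fun i => b i ≤ t)).card)
  have hV : V.Nonempty := by
    obtain ⟨i, hi, hmax⟩ := I.exists_max_image b hI
    refine ⟨b i, Finset.mem_filter.2 ⟨Finset.mem_image_of_mem _ hi, ?_⟩⟩
    rw [Finset.filter_true_of_mem hmax]; omega
  obtain ⟨t, ht, hmin⟩ := V.exists_min_image id hV
  refine ⟨t, (Finset.mem_filter.1 ht).2, ?_⟩
  have hsplit := Finset.card_filter_add_card_filter_not (s := I) (fun i => t ≤ b i)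
  by_contra! hlt
  have hne : (I.filter (fun i => ¬ t ≤ b i)).Nonempty := by
    rw [← Finset.card_pos]; omega
  obtain ⟨j, hj, hjmax⟩ := Finset.exists_max_image _ b hne
  rw [Finset.mem_filter, not_le] at hj
  have hjV : b j ∈ V := by
    refine Finset.mem_filter.2 ⟨Finset.mem_image_of_mem _ hj.1, ?_⟩
    have : (I.filter (fun i => ¬ t ≤ b i)).card ≤ (I.filter (fun i => b i ≤ b j)).card :=
      Finset.card_le_card fun i hi =>
        Finset.mem_filter.2 ⟨(Finset.mem_filter.1 hi).1, hjmax i hi⟩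
    omega
  exact absurd (hmin _ hjV) (not_le.2 hj.2)

/-- Pairing of small values of `b` with large ones: `r` pairs at least half of `I`. -/
theorem exists_median_pairing (I : Finset ι) (b : ι → ℝ) :
    ∃ (t : ℝ) (L : Finset ι) (r : ι → ι), L ⊆ I ∧ I.card ≤ 2 * L.card ∧
      (∀ i ∈ L, r i ∈ I ∧ b i ≤ t ∧ t ≤ b (r i)) ∧ Set.InjOn r L := by
  classical
  obtain ⟨t, h1, h2⟩ := exists_median I b
  obtain ⟨L, hL, hLc⟩ := Finset.exists_subset_card_eq
    (min_le_left (I.filter (fun i => b i ≤ t)).card (I.filter (fun i => t ≤ b i)).card)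
  have hle : L.card ≤ (I.filter (fun i => t ≤ b i)).card := hLc ▸ min_le_right _ _
  obtain ⟨R, hR, hRc⟩ := Finset.exists_subset_card_eq hle
  let e := Finset.equivOfCardEq hRc.symm
  have hr : ∀ i (hi : i ∈ L),
      (if h : i ∈ L then (e ⟨i, h⟩ : ι) else i) = e ⟨i, hi⟩ := fun i hi => dif_pos hi
  refine ⟨t, L, fun i => if h : i ∈ L then (e ⟨i, h⟩ : ι) else i,
    hL.trans (Finset.filter_subset _ _), by omega, fun i hi => ?_, fun i hi j hj hij => ?_⟩
  · have hRi := Finset.mem_filter.1 (hR (e ⟨i, hi⟩).2)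
    simp only [hr i hi]
    exact ⟨hRi.1, (Finset.mem_filter.1 (hL hi)).2, hRi.2⟩
  · simp only [hr i hi, hr j hj] at hij
    simpa using e.injective (Subtype.ext hij)

theorem HasCells.of_pairing {K N : ℕ} {I L : Finset ι} {g u v : ι → W} {r : ι → ι}
    (hLI : L ⊆ I) (hcard : I.card ≤ 2 * L.card) (hr : ∀ i ∈ L, r i ∈ I) (hinj : Set.InjOn r L)
    (hu : HasCells K N L u) (hv : ∀ J ⊆ L, HasCells K N J v)
    (huv : ∀ D, ∀ i ∈ L, SignedOn D (u i) → SignedOn D (v i) →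
      SignedOn D (g i) ∨ SignedOn D (g (r i))) :
    HasCells (K * K) (4 * N * N) I g := by
  classical
  obtain ⟨C, hC, hcov, hJ⟩ := hu
  choose! J hJL hJc hJs using hJ
  have hcells : ∀ D ∈ C, HasCells K N (J D) v := fun D hD => hv _ (hJL D hD)
  choose! C' hC' hcov' hJ' using hcells
  refine ⟨C.biUnion fun D => (C' D).image (D ∩ ·), ?_, fun φ => ?_, fun E hE => ?_⟩
  · exact (Finset.card_biUnion_le_card_mul _ _ K fun D hD =>
      Finset.card_image_le.trans (hC' D hD)).trans (Nat.mul_le_mul_right _ hC)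
  · obtain ⟨D, hD, hφ⟩ := hcov φ
    obtain ⟨D', hD', hφ'⟩ := hcov' D hD φ
    exact ⟨D ∩ D', Finset.mem_biUnion.2 ⟨D, hD, Finset.mem_image_of_mem _ hD'⟩, hφ, hφ'⟩
  · obtain ⟨D, hD, hE⟩ := Finset.mem_biUnion.1 hE
    obtain ⟨D', hD', rfl⟩ := Finset.mem_image.1 hE
    obtain ⟨J', hJJ, hJ'c, hJ's⟩ := hJ' D hD D' hD'
    refine ⟨I.filter (fun i => SignedOn (D ∩ D') (g i)), Finset.filter_subset _ _, ?_,
      fun i hi => (Finset.mem_filter.1 hi).2⟩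
    have hJ'L : J' ⊆ L := hJJ.trans (hJL D hD)
    have hsub : J' ⊆ J'.filter (fun i => SignedOn (D ∩ D') (g i)) ∪
        J'.filter (fun i => SignedOn (D ∩ D') (g (r i))) := by
      intro i hi
      rw [← Finset.filter_or, Finset.mem_filter]
      exact ⟨hi, huv _ i (hJ'L hi) ((hJs D hD i (hJJ hi)).mono Set.inter_subset_left)
        ((hJ's i hi).mono Set.inter_subset_right)⟩
    have hleft : (J'.filter (fun i => SignedOn (D ∩ D') (g i))).card ≤
        (I.filter (fun i => SignedOn (D ∩ D') (g i))).card :=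
      Finset.card_le_card (Finset.filter_subset_filter _ (hJ'L.trans hLI))
    have hright : (J'.filter (fun i => SignedOn (D ∩ D') (g (r i)))).card ≤
        (I.filter (fun i => SignedOn (D ∩ D') (g i))).card := by
      refine Finset.card_le_card_of_injOn r (fun i hi => ?_) (hinj.mono fun i hi => ?_)
      · have hi := Finset.mem_filter.1 hi
        exact Finset.mem_filter.2 ⟨hr i (hJ'L hi.1), hi.2⟩
      · exact hJ'L (Finset.mem_filter.1 hi).1
    have hJ'card := (Finset.card_le_card hsub).trans (Finset.card_union_le _ _)
    have h1 := hJc D hD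
    set x := (I.filter (fun i => SignedOn (D ∩ D') (g i))).card
    calc I.card ≤ 2 * L.card := hcard
      _ ≤ 2 * (N * (J D).card) := by gcongr
      _ ≤ 2 * (N * (N * J'.card)) := by gcongr
      _ ≤ 2 * (N * (N * (x + x))) := by gcongr; omega
      _ = 4 * N * N * x := by ring

theorem HasCells.of_ne_zero_or_eq_zero {K K₀ K₁ N N₀ N₁ : ℕ} {I : Finset ι} {g : ι → W}
    (a : Dual ℝ W) (h₀ : ∀ I₀ ⊆ I, (∀ i ∈ I₀, a (g i) = 0) → HasCells K₀ N₀ I₀ g)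
    (h₁ : ∀ I₁ ⊆ I, ∀ g' : ι → W, (∀ i ∈ I₁, a (g' i) = 1) → HasCells K₁ N₁ I₁ g')
    (hK₀ : K₀ ≤ K) (hK₁ : K₁ ≤ K) (hN₀ : 2 * N₀ ≤ N) (hN₁ : 2 * N₁ ≤ N) :
    HasCells K N I g := by
  classical
  have hsplit := Finset.card_filter_add_card_filter_not (s := I) (fun i => a (g i) = 0)
  by_cases hc : I.card ≤ 2 * (I.filter (fun i => a (g i) = 0)).card
  · exact (h₀ _ (Finset.filter_subset _ _) fun i hi => (Finset.mem_filter.1 hi).2).mono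
      (Finset.filter_subset _ _) hc (fun D i _ h => h) hK₀ hN₀
  · refine (h₁ (I.filter (fun i => ¬ a (g i) = 0)) (Finset.filter_subset _ _)
      (fun i => (a (g i))⁻¹ • g i) fun i hi => ?_).mono
      (Finset.filter_subset _ _) (c := 2) (by omega) (fun D i hi h => ?_) hK₁ hN₁
    · simpa using inv_mul_cancel₀ (Finset.mem_filter.1 hi).2
    · exact h.of_smul (inv_ne_zero (Finset.mem_filter.1 hi).2)

end Cells

/-- For vectors in a space of dimension `m`, the dual space has a cover by boundedly many cells,
each of which is crossed by at most a fixed proportion less than one of the vectors. -/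
theorem exists_hasCells (m : ℕ) : ∃ K N : ℕ, ∀ (W : Type) [AddCommGroup W] [Module ℝ W]
    [FiniteDimensional ℝ W], finrank ℝ W = m → ∀ (ι : Type) (I : Finset ι) (g : ι → W),
      HasCells K N I g := by
  classical
  induction m with
  | zero =>
    refine ⟨1, 1, fun W _ _ _ hW ι I g => ⟨{Set.univ}, by simp, by simp, fun D _ => ?_⟩⟩
    have := Module.finrank_zero_iff.1 hW
    refine ⟨I, subset_rfl, by simp, fun i _ => Or.inl fun φ _ => ?_⟩
    rw [Subsingleton.elim (g i) 0, map_zero]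
  | succ m ih =>
    obtain ⟨K, N, ih⟩ := ih
    have hker : ∀ (W : Type) [AddCommGroup W] [Module ℝ W] [FiniteDimensional ℝ W],
        finrank ℝ W = m + 1 → ∀ a : Dual ℝ W, a ≠ 0 → ∀ (ι : Type) (I : Finset ι) (g : ι → W),
        (∀ i ∈ I, a (g i) = 0) → HasCells K N I g := by
      intro W _ _ _ hW a ha ι I g hg
      have hfin : finrank ℝ (LinearMap.ker a) = m := by
        have := Module.Dual.finrank_ker_add_one_of_ne_zero ha
        omega
      have hmem : ∀ i, (if i ∈ I then g i else 0) ∈ LinearMap.ker a := by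
        intro i
        split_ifs with hi
        · exact hg i hi
        · exact zero_mem _
      refine (HasCells.of_submodule _ hmem (ih _ hfin ι I _)).mono subset_rfl (c := 1)
        (by simp) (fun D i hi h => ?_) le_rfl (by simp)
      simpa [hi] using h
    refine ⟨K * K + K + 2, 8 * N * N + 2 * N + 2, fun W _ _ _ hW ι I g => ?_⟩
    have : Nontrivial W := Module.nontrivial_of_finrank_pos (R := ℝ) (by omega)
    obtain ⟨a, ha⟩ := exists_ne (0 : Dual ℝ W)
    by_cases hb : ∃ b : Dual ℝ W, ∀ t : ℝ, b - t • a ≠ 0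
    · obtain ⟨b, hb⟩ := hb
      refine HasCells.of_ne_zero_or_eq_zero a (fun I₀ _ h => hker W hW a ha ι I₀ g h)
        (K₁ := K * K) (N₁ := 4 * N * N) (fun I₁ _ g' hg' => ?_) (by omega) (by omega)
        (by omega) (by nlinarith)
      obtain ⟨t, L, r, hLI, hcard, hr, hinj⟩ := exists_median_pairing I₁ (fun i => b (g' i))
      refine HasCells.of_pairing (u := fun i => g' (r i) - g' i)
        (v := fun i => if b (g' i) = b (g' (r i)) then g' i else
          (b (g' (r i)) - t) • g' i - (b (g' i) - t) • g' (r i))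
        hLI hcard (fun i hi => (hr i hi).1) hinj
        (hker W hW a ha ι L _ fun i hi => ?_)
        (fun J hJ => hker W hW (b - t • a) (hb t) ι J _ fun i hi => ?_)
        (fun D i hi hu hv => ?_)
      · simp [hg' i (hLI hi), hg' _ (hr i hi).1]
      · have hi := hJ hi
        obtain ⟨h1, h2, h3⟩ := hr i hi
        split_ifs with heq
        · have : b (g' i) = t := le_antisymm h2 (by linarith)
          simp [hg' i (hLI hi), this]
        · simp only [map_sub, map_smul, LinearMap.sub_apply, LinearMap.smul_apply, smul_eq_mul,
            hg' i (hLI hi), hg' _ h1]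
          ring
      · obtain ⟨h1, h2, h3⟩ := hr i hi
        split_ifs at hv with heq
        · exact Or.inl hv
        · exact SignedOn.of_sub_of_combination (sub_nonpos.2 h2) (sub_nonneg.2 h3)
            (fun h => heq (by linarith)) hu hv
    · push Not at hb
      have hinj : ∀ x y : W, a x = a y → x = y := by
        intro x y hxy
        rw [← sub_eq_zero, ← Module.forall_dual_apply_eq_zero_iff ℝ]
        intro b
        obtain ⟨t, ht⟩ := hb b
        rw [sub_eq_zero.1 ht]
        simp [hxy]
      refine HasCells.of_ne_zero_or_eq_zero a (fun I₀ _ h => hker W hW a ha ι I₀ g h)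
        (K₁ := 2) (N₁ := 1) (fun I₁ _ g' hg' => ?_) (by omega) (by omega)
        (by omega) (by omega)
      rcases I₁.eq_empty_or_nonempty with rfl | ⟨i₀, hi₀⟩
      · exact ⟨{Set.univ}, by simp, by simp, fun D _ => ⟨∅, by simp⟩⟩
      · have heq : ∀ i ∈ I₁, g' i = g' i₀ := fun i hi =>
          hinj _ _ ((hg' i hi).trans (hg' i₀ hi₀).symm)
        refine ⟨{{φ | 0 ≤ φ (g' i₀)}, {φ | φ (g' i₀) ≤ 0}}, Finset.card_le_two, fun φ => ?_,
          fun D hD => ⟨I₁, subset_rfl, by simp, fun i hi => ?_⟩⟩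
        · simpa using le_total 0 (φ (g' i₀))
        · rw [heq i hi]
          simp only [Finset.mem_insert, Finset.mem_singleton] at hD
          rcases hD with rfl | rfl
          · exact Or.inl fun φ hφ => hφ
          · exact Or.inr fun φ hφ => hφ

section Packing

variable {α : Type}

/-- `P` is a family of pairwise disjoint `s`-element subsets of `S`. -/
def IsPacking (S : Finset α) (s : ℕ) (P : Finset (Finset α)) : Prop :=
  (∀ A ∈ P, A ⊆ S ∧ A.card = s) ∧ (P : Set (Finset α)).PairwiseDisjoint id

open Classical in
/-- The points of `S` not covered by `P`. -/
def uncovered (S : Finset α) (P : Finset (Finset α)) : Finset α := S \ P.biUnion id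

open Classical in
theorem mem_uncovered {S : Finset α} {P : Finset (Finset α)} {x : α} :
    x ∈ uncovered S P ↔ x ∈ S ∧ ∀ A ∈ P, x ∉ A := by
  simp [uncovered]

theorem uncovered_subset (S : Finset α) (P : Finset (Finset α)) : uncovered S P ⊆ S :=
  fun _ hx => (mem_uncovered.1 hx).1

open Classical in
theorem IsPacking.card_mul_add_card_uncovered {S : Finset α} {s : ℕ} {P : Finset (Finset α)}
    (h : IsPacking S s P) : P.card * s + (uncovered S P).card = S.card := by
  have hsub : P.biUnion id ⊆ S := Finset.biUnion_subset.2 fun A hA => (h.1 A hA).1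
  have hcard : (P.biUnion id).card = P.card * s := by
    rw [Finset.card_biUnion h.2]
    exact Finset.sum_const_nat fun A hA => (h.1 A hA).2
  rw [← hcard, add_comm]
  exact Finset.card_sdiff_add_card_eq_card hsub

/-- Choosing disjoint subsets of prescribed size from sufficiently large sets. -/
theorem exists_disjoint_subsets {κ : Type} (C : Finset κ) (A : κ → Finset α) (s : ℕ)
    (hA : ∀ k ∈ C, C.card * s ≤ (A k).card) :
    ∃ T : κ → Finset α, (∀ k ∈ C, T k ⊆ A k ∧ (T k).card = s) ∧
      (C : Set κ).PairwiseDisjoint T := by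
  classical
  induction C using Finset.induction_on with
  | empty => exact ⟨A, by simp, by simp⟩
  | insert k C hk ih =>
    rw [Finset.card_insert_of_notMem hk] at hA
    obtain ⟨T, hT, hdis⟩ := ih fun j hj =>
      (Nat.mul_le_mul_right s (Nat.le_succ _)).trans (hA j (Finset.mem_insert_of_mem hj))
    have hused : (C.biUnion T).card ≤ C.card * s :=
      Finset.card_biUnion_le_card_mul _ _ _ fun j hj => (hT j hj).2.le
    have hfree : s ≤ (A k \ C.biUnion T).card := by
      have h1 := hA k (Finset.mem_insert_self _ _)
      have h2 := Finset.le_card_sdiff (C.biUnion T) (A k)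
      rw [add_mul, one_mul] at h1
      omega
    obtain ⟨B, hB, hBc⟩ := Finset.exists_subset_card_eq hfree
    have hne : ∀ j ∈ C, j ≠ k := fun j hj h => hk (h ▸ hj)
    have hBT : ∀ j ∈ C, Disjoint B (T j) := fun j hj =>
      (Finset.disjoint_sdiff.symm.mono_left hB).mono_right (Finset.subset_biUnion_of_mem T hj)
    refine ⟨Function.update T k B, fun j hj => ?_, fun i hi j hj hij => ?_⟩
    · rcases Finset.mem_insert.1 hj with rfl | hj
      · simpa [hBc] using hB.trans Finset.sdiff_subset
      · rw [Function.update_of_ne (hne j hj)]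
        exact hT j hj
    · rcases Finset.mem_insert.1 (Finset.mem_coe.1 hi) with rfl | hiC <;>
        rcases Finset.mem_insert.1 (Finset.mem_coe.1 hj) with rfl | hjC
      · exact absurd rfl hij
      · simpa [Function.onFun, Function.update_of_ne (hne j hjC)] using hBT j hjC
      · simpa [Function.onFun, Function.update_of_ne (hne i hiC)] using (hBT i hiC).symm
      · simpa [Function.onFun, Function.update_of_ne (hne j hjC),
          Function.update_of_ne (hne i hiC)] using hdis hiC hjC hij

/-- A finite set splits into blocks of size at most `t`, all but one of them full. -/
theorem exists_blocks (R : Finset α) {t : ℕ} (ht : 0 < t) :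
    ∃ P : Finset (Finset α), (∀ A ∈ P, A ⊆ R ∧ A.card ≤ t) ∧
      (P : Set (Finset α)).PairwiseDisjoint id ∧ (∀ x ∈ R, ∃ A ∈ P, x ∈ A) ∧
      P.card * t + 1 ≤ R.card + t := by
  classical
  induction R using Finset.strongInduction with
  | H R ih =>
    rcases R.eq_empty_or_nonempty with rfl | hR
    · exact ⟨∅, by simp, by simp, by simp, by simpa using Nat.succ_le_of_lt ht⟩
    rcases le_or_gt R.card t with hc | hc
    · refine ⟨{R}, by simpa using hc, by simp, fun x hx => ⟨R, by simp, hx⟩, ?_⟩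
      have := hR.card_pos
      simp; omega
    · obtain ⟨B, hB, hBc⟩ := Finset.exists_subset_card_eq hc.le
      have hBne : B.Nonempty := Finset.card_pos.1 (hBc ▸ ht)
      obtain ⟨P, hP, hdis, hcov, hcard⟩ := ih (R \ B) (Finset.sdiff_ssubset hB hBne)
      refine ⟨insert B P, fun A hA => ?_, ?_, fun x hx => ?_, ?_⟩
      · rcases Finset.mem_insert.1 hA with rfl | hA
        · exact ⟨hB, hBc.le⟩
        · exact ⟨(hP A hA).1.trans Finset.sdiff_subset, (hP A hA).2⟩
      · rw [Finset.coe_insert]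
        refine hdis.insert fun A hA _ => ?_
        exact Finset.disjoint_sdiff.mono_right (hP A hA).1
      · by_cases hxB : x ∈ B
        · exact ⟨B, by simp, hxB⟩
        · obtain ⟨A, hA, hxA⟩ := hcov x (Finset.mem_sdiff.2 ⟨hx, hxB⟩)
          exact ⟨A, Finset.mem_insert_of_mem hA, hxA⟩
      · have h1 := Finset.card_insert_le B P
        have h2 := Finset.card_sdiff_add_card_eq_card hB
        have h3 := Nat.mul_le_mul_right t h1
        rw [add_mul, one_mul] at h3
        omega

variable {Q : Type} (Crosses : Q → Finset α → Prop)

open Classical in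
/-- The number of members of `P` crossed by `q`. -/
def crossNumber (q : Q) (P : Finset (Finset α)) : ℕ := (P.filter (Crosses q)).card

/-- Large sets contain at most `K` disjoint sets of size `s`, not all crossed by the same `q`. -/
def HasUncrossedFamilies (K M : ℕ) : Prop :=
  ∀ (S : Finset α) (s : ℕ), 0 < s → M * s ≤ S.card → ∃ F : Finset (Finset α),
    F.Nonempty ∧ F.card ≤ K ∧ IsPacking S s F ∧ ∀ q, ∃ A ∈ F, ¬ Crosses q A

variable {Crosses}

theorem crossNumber_union_le [DecidableEq (Finset α)] (q : Q) (P P' : Finset (Finset α)) :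
    crossNumber Crosses q (P ∪ P') ≤ crossNumber Crosses q P + crossNumber Crosses q P' := by
  classical
  have : crossNumber Crosses q (P ∪ P') =
      (P.filter (Crosses q) ∪ P'.filter (Crosses q)).card := by
    rw [crossNumber, ← Finset.filter_union]
  rw [this]
  exact Finset.card_union_le _ _

theorem crossNumber_le_card (q : Q) (P : Finset (Finset α)) :
    crossNumber Crosses q P ≤ P.card := by
  classical
  exact Finset.card_filter_le _ _

/-- Greedy exhaustion by families that are never crossed completely. -/
theorem HasUncrossedFamilies.exists_packing {K M : ℕ} (h : HasUncrossedFamilies Crosses K M)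
    (S : Finset α) {s : ℕ} (hs : 0 < s) :
    ∃ P, IsPacking S s P ∧ (uncovered S P).card ≤ M * s ∧
      ∀ q, K * crossNumber Crosses q P + P.card ≤ K * P.card := by
  classical
  induction S using Finset.strongInduction with
  | H S ih =>
    rcases le_or_gt (M * s) S.card with hc | hc
    swap
    · exact ⟨∅, ⟨by simp, by simp⟩, (Finset.card_le_card (uncovered_subset _ _)).trans hc.le,
        fun q => by simp [crossNumber]⟩
    obtain ⟨F, hFne, hFK, hF, hFq⟩ := h S s hs hc
    have hsub : uncovered S F ⊂ S := by
      refine (uncovered_subset S F).ssubset_of_ne fun heq => ?_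
      have h1 := hF.card_mul_add_card_uncovered
      have h2 : 0 < F.card * s := Nat.mul_pos hFne.card_pos hs
      rw [heq] at h1
      omega
    obtain ⟨P, hP, hPu, hPq⟩ := ih _ hsub
    have hdisj : ∀ A ∈ F, ∀ B ∈ P, Disjoint A B := fun A hA B hB =>
      Finset.disjoint_left.2 fun x hxA hxB => (mem_uncovered.1 ((hP.1 B hB).1 hxB)).2 A hA hxA
    have hFP : Disjoint F P := Finset.disjoint_left.2 fun A hA hA' => by
      have := (Finset.disjoint_self_iff_empty _).1 (hdisj A hA A hA')
      have h2 := (hF.1 A hA).2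
      simp [this] at h2
      omega
    refine ⟨F ∪ P, ⟨fun A hA => ?_, ?_⟩, ?_, fun q => ?_⟩
    · rcases Finset.mem_union.1 hA with hA | hA
      · exact hF.1 A hA
      · exact ⟨(hP.1 A hA).1.trans hsub.subset, (hP.1 A hA).2⟩
    · rw [Finset.coe_union, Set.pairwiseDisjoint_union]
      exact ⟨hF.2, hP.2, fun A hA B hB _ => hdisj A hA B hB⟩
    · refine (Finset.card_le_card fun x hx => ?_).trans hPu
      simp only [mem_uncovered, Finset.mem_union] at hx ⊢
      exact ⟨⟨hx.1, fun A hA => hx.2 A (Or.inl hA)⟩, fun A hA => hx.2 A (Or.inr hA)⟩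
    · obtain ⟨A, hA, hAq⟩ := hFq q
      have hlt : crossNumber Crosses q F < F.card :=
        Finset.card_lt_card (Finset.filter_ssubset.2 ⟨A, hA, hAq⟩)
      have h1 := crossNumber_union_le (Crosses := Crosses) q F P
      have h2 := hPq q
      rw [Finset.card_union_of_disjoint hFP]
      nlinarith

/-- Iterating the packing inside its members multiplies the crossing proportions. -/
theorem HasUncrossedFamilies.exists_packing_pow {K M : ℕ} (hK : 0 < K)
    (h : HasUncrossedFamilies Crosses K M)
    (hmono : ∀ q A B, A ⊆ B → Crosses q A → Crosses q B) (j : ℕ) :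
    ∀ δ : ℝ, 0 < δ → ∃ M' : ℕ, ∀ (S : Finset α) (s : ℕ), 0 < s → ∃ P, IsPacking S s P ∧
      ((uncovered S P).card : ℝ) ≤ δ * S.card + M' * s ∧
      ∀ q, (s : ℝ) * crossNumber Crosses q P ≤ (1 - 1 / (K : ℝ)) ^ j * S.card := by
  classical
  have hK0 : (0 : ℝ) < K := Nat.cast_pos.2 hK
  have hθ : 0 ≤ 1 - 1 / (K : ℝ) := by
    rw [sub_nonneg, div_le_one hK0]
    exact_mod_cast hK
  induction j with
  | zero =>
    intro δ hδ
    refine ⟨M, fun S s hs => ?_⟩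
    obtain ⟨P, hP, hPu, -⟩ := h.exists_packing S hs
    refine ⟨P, hP, ?_, fun q => ?_⟩
    · have : ((uncovered S P).card : ℝ) ≤ M * s := by exact_mod_cast hPu
      have : 0 ≤ δ * S.card := by positivity
      linarith
    · have h1 := hP.card_mul_add_card_uncovered
      have h2 := Nat.mul_le_mul_left s (crossNumber_le_card (Crosses := Crosses) q P)
      rw [pow_zero, one_mul]
      have : s * crossNumber Crosses q P ≤ S.card := by nlinarith
      exact_mod_cast this
  | succ j ih =>
    intro δ hδ
    obtain ⟨M₁, ih⟩ := ih (δ / 2) (by positivity)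
    obtain ⟨L, hL⟩ := exists_nat_gt (2 * M₁ / δ)
    have hL0 : (0 : ℝ) < L := lt_of_le_of_lt (by positivity) hL
    have hLpos : 0 < L := by exact_mod_cast hL0
    have hLM : (M₁ : ℝ) ≤ δ / 2 * L := by
      rw [div_lt_iff₀ hδ] at hL
      linarith
    refine ⟨M * L, fun S s hs => ?_⟩
    obtain ⟨B, hB, hBu, hBq⟩ := h.exists_packing S (Nat.mul_pos hLpos hs)
    choose P hP hPu hPq using fun A : Finset α => ih A s hs
    have hBcard : (B.card : ℝ) * (L * s) ≤ S.card := by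
      have := hB.card_mul_add_card_uncovered
      have : B.card * (L * s) ≤ S.card := by omega
      exact_mod_cast this
    refine ⟨B.biUnion P, ⟨fun A hA => ?_, fun A hA A' hA' hne => ?_⟩, ?_, fun q => ?_⟩
    · obtain ⟨D, hD, hA⟩ := Finset.mem_biUnion.1 hA
      exact ⟨((hP D).1 A hA).1.trans (hB.1 D hD).1, ((hP D).1 A hA).2⟩
    · obtain ⟨D, hD, hA⟩ := Finset.mem_biUnion.1 (Finset.mem_coe.1 hA)
      obtain ⟨D', hD', hA'⟩ := Finset.mem_biUnion.1 (Finset.mem_coe.1 hA')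
      by_cases hDD : D = D'
      · subst hDD
        exact (hP D).2 hA hA' hne
      · exact Finset.disjoint_of_subset_left ((hP D).1 A hA).1
          (Finset.disjoint_of_subset_right ((hP D').1 A' hA').1 (hB.2 hD hD' hDD))
    · have hsub : uncovered S (B.biUnion P) ⊆
          uncovered S B ∪ B.biUnion fun D => uncovered D (P D) := by
        intro x hx
        simp only [mem_uncovered, Finset.mem_union, Finset.mem_biUnion] at hx ⊢
        by_cases hxB : ∃ D ∈ B, x ∈ D
        · obtain ⟨D, hD, hxD⟩ := hxB
          exact Or.inr ⟨D, hD, hxD, fun A hA => hx.2 A ⟨D, hD, hA⟩⟩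
        · push Not at hxB
          exact Or.inl ⟨hx.1, hxB⟩
      have h1 : (uncovered S (B.biUnion P)).card ≤
          (uncovered S B).card + ∑ D ∈ B, (uncovered D (P D)).card :=
        (Finset.card_le_card hsub).trans ((Finset.card_union_le _ _).trans
          (Nat.add_le_add_left Finset.card_biUnion_le _))
      have h2 : ∑ D ∈ B, ((uncovered D (P D)).card : ℝ) ≤ B.card • (δ * (L * s)) := by
        refine Finset.sum_le_card_nsmul _ _ _ fun D hD => (hPu D).trans ?_
        rw [(hB.1 D hD).2]
        push_cast
        have := mul_le_mul_of_nonneg_right hLM (Nat.cast_nonneg (α := ℝ) s)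
        linarith
      have h3 : ((uncovered S B).card : ℝ) ≤ M * (L * s) := by exact_mod_cast hBu
      have h4 : ((uncovered S (B.biUnion P)).card : ℝ) ≤
          (uncovered S B).card + ∑ D ∈ B, ((uncovered D (P D)).card : ℝ) := by exact_mod_cast h1
      rw [nsmul_eq_mul] at h2
      have h5 := mul_le_mul_of_nonneg_left hBcard hδ.le
      push_cast
      linarith
    · have hsub : (B.biUnion P).filter (Crosses q) ⊆
          (B.filter (Crosses q)).biUnion fun D => (P D).filter (Crosses q) := by
        intro A hA
        simp only [Finset.mem_filter, Finset.mem_biUnion] at hA ⊢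
        obtain ⟨⟨D, hD, hAD⟩, hq⟩ := hA
        exact ⟨D, ⟨hD, hmono q A D ((hP D).1 A hAD).1 hq⟩, hAD, hq⟩
      have h1 : crossNumber Crosses q (B.biUnion P) ≤
          ∑ D ∈ B.filter (Crosses q), crossNumber Crosses q (P D) :=
        (Finset.card_le_card hsub).trans Finset.card_biUnion_le
      have h2 : ∑ D ∈ B.filter (Crosses q), (s : ℝ) * crossNumber Crosses q (P D) ≤
          (B.filter (Crosses q)).card • ((1 - 1 / (K : ℝ)) ^ j * (L * s)) := by
        refine Finset.sum_le_card_nsmul _ _ _ fun D hD => (hPq D q).trans ?_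
        rw [(hB.1 D (Finset.mem_filter.1 hD).1).2]
        push_cast
        exact le_rfl
      have h3 : ((B.filter (Crosses q)).card : ℝ) ≤ (1 - 1 / (K : ℝ)) * B.card := by
        have h3 : (K : ℝ) * (B.filter (Crosses q)).card + B.card ≤ K * B.card := by
          exact_mod_cast hBq q
        have h4 : (1 - 1 / (K : ℝ)) * B.card = (K * B.card - B.card) / K := by
          field_simp
        rw [h4, le_div_iff₀ hK0]
        linarith
      calc (s : ℝ) * crossNumber Crosses q (B.biUnion P)
          ≤ s * ∑ D ∈ B.filter (Crosses q), (crossNumber Crosses q (P D) : ℝ) := by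
            gcongr; exact_mod_cast h1
        _ ≤ (B.filter (Crosses q)).card * ((1 - 1 / (K : ℝ)) ^ j * (L * s)) := by
            rw [Finset.mul_sum, ← nsmul_eq_mul]; exact h2
        _ ≤ (1 - 1 / (K : ℝ)) * B.card * ((1 - 1 / (K : ℝ)) ^ j * (L * s)) := by gcongr
        _ = (1 - 1 / (K : ℝ)) ^ (j + 1) * (B.card * (L * s)) := by ring
        _ ≤ (1 - 1 / (K : ℝ)) ^ (j + 1) * S.card := by gcongr

/-- Partitions into at most `p` sets of size at most `⌈2n / p⌉`, up to a bounded number of sets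
crossed in a proportion of at most `ε`. -/
theorem HasUncrossedFamilies.exists_partition {K M : ℕ} (hK : 0 < K)
    (h : HasUncrossedFamilies Crosses K M)
    (hmono : ∀ q A B, A ⊆ B → Crosses q A → Crosses q B) {ε : ℝ} (hε : 0 < ε) :
    ∃ M' : ℕ, ∀ (S : Finset α) (p : ℕ), 0 < p → ∃ P : Finset (Finset α), P.card ≤ p ∧
      (∀ A ∈ P, A ⊆ S ∧ A.card ≤ (2 * S.card + p - 1) / p) ∧
      (P : Set (Finset α)).PairwiseDisjoint id ∧ (∀ x ∈ S, ∃ A ∈ P, x ∈ A) ∧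
      ∀ q, (crossNumber Crosses q P : ℝ) ≤ ε * p + M' := by
  classical
  have hK0 : (0 : ℝ) < K := Nat.cast_pos.2 hK
  obtain ⟨j, hj⟩ := exists_pow_lt_of_lt_one hε (show 1 - 1 / (K : ℝ) < 1 by
    have : 0 < 1 / (K : ℝ) := by positivity
    linarith)
  obtain ⟨M', hM'⟩ := h.exists_packing_pow hK hmono j ε hε
  refine ⟨M' + 1, fun S p hp => ?_⟩
  rcases S.eq_empty_or_nonempty with rfl | hS
  · exact ⟨∅, by simp, by simp, by simp, by simp, fun q => by simp [crossNumber]; positivity⟩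
  set t := (2 * S.card + p - 1) / p with ht
  have hSc := hS.card_pos
  have hpt : 2 * S.card ≤ p * t := by
    have h1 := Nat.div_add_mod (2 * S.card + p - 1) p
    have h2 := Nat.mod_lt (2 * S.card + p - 1) hp
    rw [← ht] at h1
    omega
  have ht0 : 0 < t := Nat.pos_of_ne_zero fun h0 => by rw [h0] at hpt; omega
  obtain ⟨P, hP, hPu, hPq⟩ := hM' S t ht0
  obtain ⟨R, hR, hRdis, hRcov, hRcard⟩ := exists_blocks (uncovered S P) ht0
  have hPcard := hP.card_mul_add_card_uncovered
  refine ⟨P ∪ R, ?_, fun A hA => ?_, ?_, fun x hx => ?_, fun q => ?_⟩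
  · refine (Finset.card_union_le _ _).trans ?_
    have : 2 * (P.card + R.card) * t < (p + 2) * t := by nlinarith
    have := Nat.lt_of_mul_lt_mul_right this
    omega
  · rcases Finset.mem_union.1 hA with hA | hA
    · exact ⟨(hP.1 A hA).1, (hP.1 A hA).2.le⟩
    · exact ⟨(hR A hA).1.trans (uncovered_subset _ _), (hR A hA).2⟩
  · rw [Finset.coe_union, Set.pairwiseDisjoint_union]
    exact ⟨hP.2, hRdis, fun A hA B hB _ => Finset.disjoint_left.2 fun x hxA hxB =>
      (mem_uncovered.1 ((hR B hB).1 hxB)).2 A hA hxA⟩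
  · by_cases hxP : ∃ A ∈ P, x ∈ A
    · obtain ⟨A, hA, hxA⟩ := hxP
      exact ⟨A, Finset.mem_union_left _ hA, hxA⟩
    · push Not at hxP
      obtain ⟨A, hA, hxA⟩ := hRcov x (mem_uncovered.2 ⟨hx, hxP⟩)
      exact ⟨A, Finset.mem_union_right _ hA, hxA⟩
  · have h1 : (crossNumber Crosses q (P ∪ R) : ℝ) ≤ crossNumber Crosses q P + R.card := by
      exact_mod_cast (crossNumber_union_le q P R).trans
        (Nat.add_le_add_left (crossNumber_le_card q R) _)
    have h2 : (t : ℝ) * crossNumber Crosses q P ≤ ε * S.card := (hPq q).trans (by gcongr)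
    have h3 : (R.card : ℝ) * t + 1 ≤ (uncovered S P).card + t := by exact_mod_cast hRcard
    have h4 : 2 * (S.card : ℝ) ≤ p * t := by exact_mod_cast hpt
    have h5 := mul_le_mul_of_nonneg_left h4 hε.le
    have htR : (0 : ℝ) < t := Nat.cast_pos.2 ht0
    refine h1.trans (le_of_mul_le_mul_right ?_ htR)
    push_cast
    nlinarith

end Packing

theorem Cuts.mono {d : ℕ} {f : (Fin d → ℝ) →ᵃ[ℝ] ℝ} {A B : Finset (Fin d → ℝ)} (hAB : A ⊆ B)
    (h : Cuts f A) : Cuts f B :=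
  h.imp (fun ⟨x, hx, hf⟩ => ⟨x, hAB hx, hf⟩) (fun ⟨x, hx, hf⟩ => ⟨x, hAB hx, hf⟩)

/-- Evaluation of an affine functional at `x` as a linear functional of `(x, 1)`. -/
def homogenize {d : ℕ} (q : (Fin d → ℝ) →ᵃ[ℝ] ℝ) : Dual ℝ ((Fin d → ℝ) × ℝ) :=
  q.linear.coprod (LinearMap.toSpanSingleton ℝ ℝ (q 0))

theorem homogenize_apply {d : ℕ} (q : (Fin d → ℝ) →ᵃ[ℝ] ℝ) (x : Fin d → ℝ) :
    homogenize q (x, 1) = q x := by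
  have := q.map_vadd 0 x
  simp only [vadd_eq_add, add_zero] at this
  simp [homogenize, this]

theorem hasUncrossedFamilies_cuts (d : ℕ) :
    ∃ K M : ℕ, 0 < K ∧ HasUncrossedFamilies (Cuts (d := d)) K M := by
  classical
  obtain ⟨K, N, hKN⟩ := exists_hasCells (finrank ℝ ((Fin d → ℝ) × ℝ))
  refine ⟨K + 1, 2 * N * K + 1, K.succ_pos, fun S s hs hS => ?_⟩
  obtain ⟨C, hC, hcov, hJ⟩ := hKN _ rfl _ S (fun x => (x, 1))
  have hA : ∀ D ∈ C, ∃ A ⊆ S, S.card ≤ 2 * N * A.card ∧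
      ∀ q, homogenize q ∈ D → ¬ Cuts q A := by
    intro D hD
    obtain ⟨J, hJS, hJc, hJs⟩ := hJ D hD
    have hcard : J.card ≤ (J.filter fun x => ∀ φ ∈ D, 0 ≤ φ (x, 1)).card +
        (J.filter fun x => ∀ φ ∈ D, φ (x, 1) ≤ 0).card := by
      refine (Finset.card_le_card fun x hx => ?_).trans (Finset.card_union_le _ _)
      rw [← Finset.filter_or, Finset.mem_filter]
      exact ⟨hx, hJs x hx⟩
    rcases le_total (J.filter fun x => ∀ φ ∈ D, 0 ≤ φ (x, 1)).card
      (J.filter fun x => ∀ φ ∈ D, φ (x, 1) ≤ 0).card with hle | hle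
    · refine ⟨J.filter fun x => ∀ φ ∈ D, φ (x, 1) ≤ 0, (Finset.filter_subset _ _).trans hJS, ?_,
        fun q hq hcut => ?_⟩
      · exact hJc.trans (by rw [mul_comm 2 N, mul_assoc]; gcongr; omega)
      · obtain ⟨⟨x, hx, hpos⟩, -⟩ := hcut
        have := (Finset.mem_filter.1 hx).2 _ hq
        rw [homogenize_apply] at this
        linarith
    · refine ⟨J.filter fun x => ∀ φ ∈ D, 0 ≤ φ (x, 1), (Finset.filter_subset _ _).trans hJS, ?_,
        fun q hq hcut => ?_⟩
      · exact hJc.trans (by rw [mul_comm 2 N, mul_assoc]; gcongr; omega)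
      · obtain ⟨-, ⟨x, hx, hneg⟩⟩ := hcut
        have := (Finset.mem_filter.1 hx).2 _ hq
        rw [homogenize_apply] at this
        linarith
  choose! A hAS hAc hAq using hA
  obtain ⟨T, hT, hdis⟩ := exists_disjoint_subsets C A s fun D hD => by
    have h1 := hAc D hD
    refine (Nat.mul_le_mul_right s hC).trans ?_
    by_contra! hlt
    have := Nat.mul_le_mul_left (2 * N) hlt.le
    nlinarith
  refine ⟨C.image T, ?_, (Finset.card_image_le.trans hC).trans K.le_succ, ⟨?_, ?_⟩, fun q => ?_⟩
  · obtain ⟨D, hD, -⟩ := hcov 0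
    exact ⟨_, Finset.mem_image_of_mem T hD⟩
  · intro B hB
    obtain ⟨D, hD, rfl⟩ := Finset.mem_image.1 hB
    exact ⟨(hT D hD).1.trans (hAS D hD), (hT D hD).2⟩
  · intro B hB B' hB' hne
    obtain ⟨D, hD, rfl⟩ := Finset.mem_image.1 (Finset.mem_coe.1 hB)
    obtain ⟨D', hD', rfl⟩ := Finset.mem_image.1 (Finset.mem_coe.1 hB')
    exact hdis hD hD' fun h => hne (h ▸ rfl)
  · obtain ⟨D, hD, hq⟩ := hcov (homogenize q)
    exact ⟨T D, Finset.mem_image_of_mem T hD, fun h => hAq D hD q hq (h.mono (hT D hD).1)⟩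

/-- Every finite set has a partition into at most `p` sets of size at most `⌈2n / p⌉` such that
every affine functional cuts at most `c` of them. -/
def HasPartitions (d p c : ℕ) : Prop :=
  ∀ S : Finset (Fin d → ℝ), ∃ P : Finset (Finset (Fin d → ℝ)), P.card ≤ p ∧
    (∀ A ∈ P, A ⊆ S ∧ A.card ≤ (2 * S.card + p - 1) / p) ∧
    (P : Set (Finset (Fin d → ℝ))).PairwiseDisjoint id ∧ (∀ x ∈ S, ∃ A ∈ P, x ∈ A) ∧
    ∀ q, crossNumber Cuts q P ≤ c

theorem exists_hasPartitions (d : ℕ) {ε : ℝ} (hε : 0 < ε) :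
    ∃ M : ℕ, ∀ p, 0 < p → HasPartitions d p ⌊ε * p + M⌋₊ := by
  obtain ⟨K, M, hK, h⟩ := hasUncrossedFamilies_cuts d
  obtain ⟨M', hM'⟩ := h.exists_partition hK (fun q A B hAB hA => hA.mono hAB) hε
  refine ⟨M', fun p hp S => ?_⟩
  obtain ⟨P, h1, h2, h3, h4, h5⟩ := hM' S p hp
  exact ⟨P, h1, h2, h3, h4, fun q => Nat.le_floor (h5 q)⟩

/-- Partition theorem: for every `d ≥ 1` there is a function `f` with `f p / p → 0`
such that any finite set of `n` points in ℝ^d and any `p > 0` admit a partition into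
at most `p` subsets, each of size at most `⌈2n / p⌉`, with every hyperplane cutting
at most `f p` of the subsets. -/
theorem partition_few_cut (d : ℕ) (hd : 1 ≤ d) :
    ∃ f : ℕ → ℕ,
      Filter.Tendsto (fun p => (f p : ℝ) / p) Filter.atTop (nhds 0) ∧
      ∀ S : Finset (Fin d → ℝ), ∀ p : ℕ, 0 < p →
        ∃ m : ℕ, m ≤ p ∧
          ∃ T : Fin m → Finset (Fin d → ℝ),
            (∀ i, T i ⊆ S) ∧
            (∀ i j, i ≠ j → Disjoint (T i) (T j)) ∧
            (∀ x ∈ S, ∃ i, x ∈ T i) ∧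
            (∀ i, (T i).card ≤ (2 * S.card + p - 1) / p) ∧
            (∀ g : (Fin d → ℝ) →ᵃ[ℝ] ℝ, g.linear ≠ 0 →
              {i : Fin m | Cuts g (T i)}.ncard ≤ f p) := by
  classical
  refine ⟨fun p => sInf {c | HasPartitions d p c}, ?_, fun S p hp => ?_⟩
  · rw [Metric.tendsto_atTop]
    intro ε hε
    obtain ⟨M, hM⟩ := exists_hasPartitions d (half_pos hε)
    obtain ⟨p₀, hp₀⟩ := exists_nat_gt (2 * M / ε)
    refine ⟨p₀ + 1, fun p hp => ?_⟩
    have hp0 : (0 : ℝ) < p := by exact_mod_cast (show 0 < p by omega)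
    have hpM : 2 * M / ε < (p : ℝ) := hp₀.trans (by exact_mod_cast hp)
    have hle : ((sInf {c | HasPartitions d p c} : ℕ) : ℝ) ≤ ε / 2 * p + M :=
      (Nat.cast_le.2 (Nat.sInf_le (hM p (by omega)))).trans (Nat.floor_le (by positivity))
    rw [div_lt_iff₀ hε] at hpM
    rw [Real.dist_0_eq_abs, abs_of_nonneg (by positivity), div_lt_iff₀ hp0]
    linarith
  · obtain ⟨M, hM⟩ := exists_hasPartitions d one_pos
    have hne : {c | HasPartitions d p c}.Nonempty := ⟨_, hM p hp⟩
    obtain ⟨P, hcard, hP, hdis, hcov, hcross⟩ := Nat.sInf_mem hne S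
    refine ⟨P.card, hcard, fun i => (P.equivFin.symm i : Finset (Fin d → ℝ)),
      fun i => (hP _ (P.equivFin.symm i).2).1, fun i j hij => ?_, fun x hx => ?_,
      fun i => (hP _ (P.equivFin.symm i).2).2, fun g _ => ?_⟩
    · exact hdis (P.equivFin.symm i).2 (P.equivFin.symm j).2 fun h =>
        hij (P.equivFin.symm.injective (Subtype.ext h))
    · obtain ⟨A, hA, hxA⟩ := hcov x hx
      exact ⟨P.equivFin ⟨A, hA⟩, by simpa using hxA⟩
    · refine le_trans ?_ (hcross g)
      refine le_of_le_of_eq ?_ (Set.ncard_coe_finset (P.filter (Cuts g)))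
      refine Set.ncard_le_ncard_of_injOn (fun i => (P.equivFin.symm i : Finset (Fin d → ℝ)))
        (fun i hi => ?_) (fun i _ j _ hij => P.equivFin.symm.injective (Subtype.ext hij))
        (Finset.finite_toSet _)
      exact Finset.mem_coe.2 (Finset.mem_filter.2 ⟨(P.equivFin.symm i).2, hi⟩)
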